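/- Two-sided bound for the collision frequency: for each γ ∈ (−3, 1] there exist constants c₁, c₂ > 0, depending only on γ, such that for all v ∈ ℝ³: c₁ (1+|v|)^γ ≤ ∫_{ℝ³} |v−u|^γ e^{−|u|²/2} du ≤ c₂ (1+|v|)^γ. Consequently, the collision frequency ν(v) = ∫_{ℝ³}∫_{S²} B(v−u,ω) μ(u) dω du = (∫_{S²} b dω) · (2π)^{−1} ∫_{ℝ³} |v−u|^γ e^{−|u|²/2} du is comparable to (1+|v|)^γ whenever the (rotation-invariant) angular mass ∫_{S²} b dω is positive. -/

import Mathlib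

/-!
The integral `I(v) = ∫ |v-u|^γ e^{-|u|²/2} du` is compared with `(1+|v|)^γ` by pointwise estimates
whose constants do not depend on `v`.

*Upper bound.* If `|v-u| ≥ 1`, then `|v-u|` and `1+|v|` differ at most by the factor `2(1+|u|)`;
if `|v-u| < 1`, then `1` and `1+|v|` do. Since `|γ| ≤ 3` this costs a factor `8(1+|u|)³`, absorbed
by the Gaussian (`cfi_le`). What remains is a Gaussian plus the truncated singularity
`|v-u|^γ 1_{|v-u|<1}`, whose integral is independent of `v` by translation invariance and finite
because `γ > -3` (`integrable_sing`).

*Lower bound.* The integral is symmetrized under `u ↦ -u`, and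
`|v-u|^γ + |v+u|^γ ≥ k(u) (1+|v|)^γ` for an explicit `k`, nonnegative and not identically zero
(`le_cfi_add_cfi`).

*Collision frequency.* The surface measure is invariant under linear isometries (`map_sphMap`), so
for `z ≠ 0` the inner integral `∫ b(z·ω/|z|) dω` equals `∫ b(e₀·ω) dω` and factors out of
`nufreq` (`nufreq_eq`); the bounds for `nufreq` are then those for `I`.
-/

noncomputable section

open MeasureTheory Real Set
open scoped ENNReal RealInnerProductSpace

/-- The velocity/position space `ℝ³`. -/
abbrev V3 : Type := EuclideanSpace ℝ (Fin 3)

/-- The normalized global Maxwellian `μ(v) = (2π)⁻¹ e^{-|v|²/2}`. -/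
def gm (v : V3) : ℝ := (2 * π)⁻¹ * Real.exp (-‖v‖ ^ 2 / 2)

/-- The boundary Maxwellian `μ_θ(v) = (2πθ²)⁻¹ e^{-|v|²/(2θ)}` at temperature `θ`. -/
def gmθ (θ : ℝ) (v : V3) : ℝ := (2 * π * θ ^ 2)⁻¹ * Real.exp (-‖v‖ ^ 2 / (2 * θ))

/-- The velocity weight `w_{q,β}(v) = (1+|v|²)^{β/2} e^{q|v|²}`. -/
def wgt (q β : ℝ) (v : V3) : ℝ := (1 + ‖v‖ ^ 2) ^ (β / 2) * Real.exp (q * ‖v‖ ^ 2)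

/-- The unit sphere `S²`. -/
abbrev Sph : Type := Metric.sphere (0 : V3) 1

/-- The surface measure on the unit sphere. -/
def sphM : Measure Sph := (volume : Measure V3).toSphere

/-- Post-collisional velocity `v' = v - [(v-u)·ω] ω`. -/
def vpost (v u : V3) (ω : Sph) : V3 := v - ⟪v - u, (ω : V3)⟫ • (ω : V3)

/-- Post-collisional velocity `u' = u + [(v-u)·ω] ω`. -/
def upost (v u : V3) (ω : Sph) : V3 := u + ⟪v - u, (ω : V3)⟫ • (ω : V3)

/-- The collision kernel `B(z,ω) = |z|^γ b(cos φ)`, `cos φ = z·ω/|z|`. -/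
def Bker (γ : ℝ) (b : ℝ → ℝ) (z : V3) (ω : Sph) : ℝ :=
  ‖z‖ ^ γ * b (⟪z, (ω : V3)⟫ / ‖z‖)

/-- Admissible angular kernel: measurable with `0 ≤ b(s) ≤ C|s|`. -/
def KernelOK (b : ℝ → ℝ) : Prop :=
  Measurable b ∧ ∃ Cb : ℝ, ∀ s, 0 ≤ b s ∧ b s ≤ Cb * |s|

/-- The Boltzmann collision operator `Q(G,F)`. -/
def Qop (γ : ℝ) (b : ℝ → ℝ) (G F : V3 → ℝ) (v : V3) : ℝ :=
  ∫ u : V3, ∫ ω : Sph,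
    Bker γ b (v - u) ω * (G (upost v u ω) * F (vpost v u ω) - G u * F v) ∂sphM

/-- The collision frequency `ν(v) = ∫∫ B(v-u,ω) μ(u) dω du`. -/
def nufreq (γ : ℝ) (b : ℝ → ℝ) (v : V3) : ℝ :=
  ∫ u : V3, ∫ ω : Sph, Bker γ b (v - u) ω * gm u ∂sphM

/-- The operator `K = K₂ - K₁` with a radial cutoff `χ(|v-u|)` inserted
(`χ ≡ 1` recovers `K` itself). -/
def Kcut (γ : ℝ) (b χ : ℝ → ℝ) (f : V3 → ℝ) (v : V3) : ℝ :=
  ∫ u : V3, ∫ ω : Sph, Bker γ b (v - u) ω * χ ‖v - u‖ *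
    (Real.sqrt (gm u * gm (upost v u ω)) * f (vpost v u ω)
      + Real.sqrt (gm u * gm (vpost v u ω)) * f (upost v u ω)
      - Real.sqrt (gm v * gm u) * f u) ∂sphM

/-- The integral operator `K = K₂ - K₁`. -/
def Kop (γ : ℝ) (b : ℝ → ℝ) (f : V3 → ℝ) : V3 → ℝ := Kcut γ b (fun _ => 1) f

/-- The linearized collision operator `L f = -μ^{-1/2}[Q(μ, √μ f) + Q(√μ f, μ)]`. -/
def Lop (γ : ℝ) (b : ℝ → ℝ) (f : V3 → ℝ) (v : V3) : ℝ :=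
  -(Real.sqrt (gm v))⁻¹ *
    (Qop γ b gm (fun u => Real.sqrt (gm u) * f u) v
      + Qop γ b (fun u => Real.sqrt (gm u) * f u) gm v)

/-- The nonlinear collision term `Γ(f,g) = μ^{-1/2} Q(√μ f, √μ g)`. -/
def Γop (γ : ℝ) (b : ℝ → ℝ) (f g : V3 → ℝ) (v : V3) : ℝ :=
  (Real.sqrt (gm v))⁻¹ *
    Qop γ b (fun u => Real.sqrt (gm u) * f u) (fun u => Real.sqrt (gm u) * g u) v

/-- The collision frequency is comparable to `(1+|v|)^γ`. -/
def NuComparable (γ : ℝ) (b : ℝ → ℝ) : Prop :=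
  ∃ c₁ > (0:ℝ), ∃ c₂ > (0:ℝ), ∀ v : V3,
    c₁ * (1 + ‖v‖) ^ γ ≤ nufreq γ b v ∧ nufreq γ b v ≤ c₂ * (1 + ‖v‖) ^ γ

/-- A bounded connected smooth domain `Ω = {ξ < 0}` in `ℝ³`. -/
structure BDomain where
  ξ : V3 → ℝ
  smooth : ContDiff ℝ (⊤ : ℕ∞) ξ
  grad_ne : ∀ x, ξ x = 0 → gradient ξ x ≠ 0
  bounded : Bornology.IsBounded {x : V3 | ξ x < 0}
  connected : IsConnected {x : V3 | ξ x < 0}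

namespace BDomain

/-- The open domain `Ω`. -/
def dom (D : BDomain) : Set V3 := {x | D.ξ x < 0}

/-- The boundary `∂Ω = {ξ = 0}`. -/
def bdry (D : BDomain) : Set V3 := {x | D.ξ x = 0}

/-- The outward unit normal `n(x) = ∇ξ(x)/|∇ξ(x)|`. -/
def nrm (D : BDomain) (x : V3) : V3 := ‖gradient D.ξ x‖⁻¹ • gradient D.ξ x

/-- Convexity of the domain: `∂²ξ ≥ c_ξ |ζ|²`. -/
def IsConvexDom (D : BDomain) : Prop :=
  ∃ cξ > (0:ℝ), ∀ x : V3, D.ξ x ≤ 0 → ∀ ζ : V3,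
    cξ * ‖ζ‖ ^ 2 ≤ iteratedFDeriv ℝ 2 D.ξ x ![ζ, ζ]

/-- The backward exit time `t_b(x,v)`. -/
def exitT (D : BDomain) (x v : V3) : ℝ :=
  sInf {τ : ℝ | 0 ≤ τ ∧ x - τ • v ∉ closure D.dom}

/-- The grazing set `γ₀ ⊆ ∂Ω × ℝ³`. -/
def grazing (D : BDomain) : Set (V3 × V3) :=
  {p | p.1 ∈ D.bdry ∧ ⟪D.nrm p.1, p.2⟫ = 0}

end BDomain

/-- `L^∞(Ω×ℝ³)` sup (as an extended real). -/
def nInt (D : BDomain) (h : V3 → V3 → ℝ) : ℝ≥0∞ :=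
  ⨆ x ∈ D.dom, ⨆ v : V3, ENNReal.ofReal |h x v|

/-- `L^∞(γ)` sup over the whole phase boundary. -/
def nBdry (D : BDomain) (h : V3 → V3 → ℝ) : ℝ≥0∞ :=
  ⨆ x ∈ D.bdry, ⨆ v : V3, ENNReal.ofReal |h x v|

/-- `L^∞(γ₋)` sup over the incoming phase boundary. -/
def nBdryIn (D : BDomain) (h : V3 → V3 → ℝ) : ℝ≥0∞ :=
  ⨆ x ∈ D.bdry, ⨆ v ∈ {v : V3 | ⟪D.nrm x, v⟫ < 0}, ENNReal.ofReal |h x v|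

/-- The diffuse-reflection boundary operator
`P_γ f (x,v) = √μ(v) ∫_{u·n(x)>0} f(u) √μ(u) |u·n(x)| du`. -/
def Pbd (D : BDomain) (f : V3 → ℝ) (x v : V3) : ℝ :=
  Real.sqrt (gm v) *
    ∫ u in {u : V3 | 0 < ⟪D.nrm x, u⟫}, f u * Real.sqrt (gm u) * |⟪D.nrm x, u⟫|

/-- The diffuse-reflection boundary value at temperature `θv`:
`μ_{θv}(v) ∫_{u·n(x)>0} F(u) |u·n(x)| du`. -/
def diffuseBC (D : BDomain) (θv : ℝ) (F : V3 → ℝ) (x v : V3) : ℝ :=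
  gmθ θv v * ∫ u in {u : V3 | 0 < ⟪D.nrm x, u⟫}, F u * |⟪D.nrm x, u⟫|

/-- Mild solution (for all times `t ∈ ℝ`) of
`∂ₜ f + v·∇ₓ f + σ(v) f = g` with prescribed incoming boundary value `bc`:
the Duhamel integral form along characteristics, backward to the first exit time. -/
def IsMildSol (D : BDomain) (σ : V3 → ℝ) (g bc f : ℝ → V3 → V3 → ℝ) : Prop :=
  (∀ t : ℝ, ∀ x ∈ closure D.dom, ∀ v : V3, v ≠ 0 →
      (x ∈ D.bdry → 0 < ⟪D.nrm x, v⟫) →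
      f t x v =
        Real.exp (-σ v * D.exitT x v) *
            bc (t - D.exitT x v) (x - D.exitT x v • v) v
          + ∫ τ in Set.Ioc (t - D.exitT x v) t,
              Real.exp (-σ v * (t - τ)) * g τ (x - (t - τ) • v) v) ∧
  (∀ t : ℝ, ∀ x ∈ D.bdry, ∀ v : V3, ⟪D.nrm x, v⟫ < 0 → f t x v = bc t x v)

/-- Mild solution on `t ≥ 0` of the initial-boundary value problem
`∂ₜ f + v·∇ₓ f + σ(v) f = g`, `f|_{γ₋} = bc`, `f(0) = f0`. -/
def IsMildSolIVP (D : BDomain) (σ : V3 → ℝ) (g bc : ℝ → V3 → V3 → ℝ)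
    (f0 : V3 → V3 → ℝ) (f : ℝ → V3 → V3 → ℝ) : Prop :=
  (∀ t : ℝ, 0 ≤ t → ∀ x ∈ closure D.dom, ∀ v : V3, v ≠ 0 →
      (x ∈ D.bdry → 0 < ⟪D.nrm x, v⟫) →
      f t x v =
        (if D.exitT x v ≤ t then
            Real.exp (-σ v * D.exitT x v) *
              bc (t - D.exitT x v) (x - D.exitT x v • v) v
          else Real.exp (-σ v * t) * f0 (x - t • v) v)
          + ∫ τ in Set.Ioc (max (t - D.exitT x v) 0) t,
              Real.exp (-σ v * (t - τ)) * g τ (x - (t - τ) • v) v) ∧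
  (∀ t : ℝ, 0 ≤ t → ∀ x ∈ D.bdry, ∀ v : V3, ⟪D.nrm x, v⟫ < 0 → f t x v = bc t x v) ∧
  (∀ x ∈ closure D.dom, ∀ v : V3, f 0 x v = f0 x v)

/-- `L²([0,T]; L²(Ω×ℝ³))` norm (as an extended real). -/
def L2T (D : BDomain) (T : ℝ) (h : ℝ → V3 → V3 → ℝ) : ℝ≥0∞ :=
  (∫⁻ t in Set.Icc (0:ℝ) T, ∫⁻ x in D.dom, ∫⁻ v : V3,
      ENNReal.ofReal (h t x v ^ 2)) ^ (1/2 : ℝ)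

/-- A smooth cutoff `χ_m`: `χ ≡ 1` on `[0,m]`, `χ ≡ 0` on `[2m,∞)`, `0 ≤ χ ≤ 1`. -/
def IsCutoff (m : ℝ) (χ : ℝ → ℝ) : Prop :=
  ContDiff ℝ (⊤ : ℕ∞) χ ∧ (∀ s, χ s ∈ Set.Icc (0:ℝ) 1) ∧
    (∀ s ≤ m, χ s = 1) ∧ ∀ s, 2 * m ≤ s → χ s = 0

/-! ### Rotation invariance of the surface measure -/

/-- A linear isometry of `ℝ³` restricted to the unit sphere. -/
def sphMap (R : V3 ≃ₗᵢ[ℝ] V3) (ω : Sph) : Sph :=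
  ⟨R ω, by simp⟩

lemma measurable_sphMap (R : V3 ≃ₗᵢ[ℝ] V3) : Measurable (sphMap R) :=
  Measurable.subtype_mk (R.continuous.measurable.comp measurable_subtype_coe)

open scoped Pointwise in
/-- The surface measure of a set is a multiple of the volume of the cone over it, and `R`
preserves both cones and volume. -/
lemma map_sphMap (R : V3 ≃ₗᵢ[ℝ] V3) : sphM.map (sphMap R) = sphM := by
  ext s hs
  rw [Measure.map_apply (measurable_sphMap R) hs, sphM,
    Measure.toSphere_apply' _ (measurable_sphMap R hs), Measure.toSphere_apply' _ hs]
  congr 1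
  have h : (Ioo (0 : ℝ) 1 • (Subtype.val '' (sphMap R ⁻¹' s)) : Set V3)
      = R.toMeasurableEquiv ⁻¹' (Ioo (0 : ℝ) 1 • (Subtype.val '' s)) := by
    ext x
    simp only [Set.mem_smul, Set.mem_preimage, Set.mem_image]
    constructor
    · rintro ⟨r, hr, _, ⟨ω, hω, rfl⟩, rfl⟩
      refine ⟨r, hr, R ω, ⟨sphMap R ω, hω, rfl⟩, ?_⟩
      simp
    · rintro ⟨r, hr, _, ⟨ω, hω, rfl⟩, hx⟩
      refine ⟨r, hr, R.symm ω, ⟨sphMap R.symm ω, ?_, rfl⟩, ?_⟩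
      · have : sphMap R (sphMap R.symm ω) = ω := by
          apply Subtype.ext
          simp [sphMap]
        rwa [this]
      · apply R.injective
        simpa using hx
  rw [h]
  exact R.measurePreserving.measure_preimage_equiv (f := R.toMeasurableEquiv) _

lemma integral_sph_inner_eq {b : ℝ → ℝ} (hb : Measurable b) {e f : V3}
    (he : ‖e‖ = 1) (hf : ‖f‖ = 1) :
    ∫ ω : Sph, b ⟪f, (ω : V3)⟫ ∂sphM = ∫ ω : Sph, b ⟪e, (ω : V3)⟫ ∂sphM := by
  -- the reflection in the bisecting plane of `e` and `f` carries `e` to `f`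
  set R : V3 ≃ₗᵢ[ℝ] V3 := Submodule.reflection (ℝ ∙ (e - f))ᗮ with hR
  have hRe : R e = f := Submodule.reflection_sub (he.trans hf.symm)
  have hm : Measurable fun ω : Sph => b ⟪f, (ω : V3)⟫ :=
    hb.comp (Continuous.measurable (by fun_prop))
  conv_lhs => rw [← map_sphMap R]
  rw [integral_map (measurable_sphMap R).aemeasurable hm.aestronglyMeasurable]
  refine integral_congr_ae (.of_forall fun ω => ?_)
  simp only [sphMap, ← hRe, LinearIsometryEquiv.inner_map_map]

lemma ae_ne_V3 (v : V3) : ∀ᵐ u : V3, u ≠ v := by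
  simp [ae_iff, measure_singleton]

lemma nufreq_eq (γ : ℝ) {b : ℝ → ℝ} (hb : Measurable b) {e : V3} (he : ‖e‖ = 1) (v : V3) :
    nufreq γ b v =
      (∫ ω : Sph, b ⟪e, (ω : V3)⟫ ∂sphM) *
        ((2 * π)⁻¹ * ∫ u : V3, ‖v - u‖ ^ γ * Real.exp (-‖u‖ ^ 2 / 2)) := by
  rw [nufreq, ← integral_const_mul, ← integral_const_mul]
  refine integral_congr_ae ?_
  filter_upwards [ae_ne_V3 v] with u hu
  have hz : 0 < ‖v - u‖ := norm_pos_iff.2 (sub_ne_zero.2 hu.symm)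
  have hf : ‖(‖v - u‖⁻¹ • (v - u) : V3)‖ = 1 := by
    rw [norm_smul, norm_inv, norm_norm, inv_mul_cancel₀ hz.ne']
  rw [← integral_sph_inner_eq hb he hf]
  simp only [Bker, gm, real_inner_smul_left, div_eq_inv_mul]
  rw [integral_mul_const, integral_const_mul]
  ring

/-! ### Gaussian and singular majorants -/

lemma integrable_gauss {a : ℝ} (ha : 0 < a) :
    Integrable fun u : V3 => Real.exp (-a * ‖u‖ ^ 2) := by
  apply Integrable.of_integral_ne_zero
  rw [GaussianFourier.integral_rexp_neg_mul_sq_norm ha]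
  positivity

/-- The local singularity `|w|^γ 1_{|w|<1}`. -/
def sing (γ : ℝ) (w : V3) : ℝ := (Metric.ball (0 : V3) 1).indicator (fun w => ‖w‖ ^ γ) w

lemma sing_nonneg (γ : ℝ) (w : V3) : 0 ≤ sing γ w :=
  Set.indicator_nonneg (fun _ _ => by positivity) _

/-- In polar coordinates this is the integrability of `r^{γ+2}` near `0`. -/
lemma integrable_sing {γ : ℝ} (hγ : -3 < γ) : Integrable (sing γ) := by
  unfold sing
  rw [integrable_indicator_iff measurableSet_ball,
    integrableOn_fun_norm_addHaar volume (f := fun r : ℝ => r ^ γ)]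
  have h : IntegrableOn (fun r : ℝ => r ^ (γ + 2)) (Ioo 0 1) :=
    (intervalIntegral.integrableOn_Ioo_rpow_iff one_pos).2 (by linarith)
  refine h.congr_fun (fun r hr => ?_) measurableSet_Ioo
  simp only [finrank_euclideanSpace, Fintype.card_fin, smul_eq_mul]
  rw [Real.rpow_add hr.1, mul_comm]
  norm_num

/-- `|v-u|^γ e^{-|u|²/2}`, the integrand of the collision frequency. -/
def cfi (γ : ℝ) (v u : V3) : ℝ := ‖v - u‖ ^ γ * Real.exp (-‖u‖ ^ 2 / 2)

lemma cfi_nonneg (γ : ℝ) (v u : V3) : 0 ≤ cfi γ v u := by unfold cfi; positivity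

lemma one_add_cube_mul_exp_le (r : ℝ) (hr : 0 ≤ r) :
    (1 + r) ^ 3 * Real.exp (-r ^ 2 / 2) ≤ Real.exp 9 * Real.exp (-(1 / 4) * r ^ 2) := by
  have h : (1 + r) ^ 3 ≤ Real.exp r ^ 3 := by
    gcongr
    linarith [Real.add_one_le_exp r]
  calc (1 + r) ^ 3 * Real.exp (-r ^ 2 / 2) ≤ Real.exp r ^ 3 * Real.exp (-r ^ 2 / 2) := by gcongr
    _ = Real.exp (3 * r + -r ^ 2 / 2) := by rw [Real.exp_add, ← Real.exp_nat_mul]; norm_num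
    _ ≤ Real.exp (9 + -(1 / 4) * r ^ 2) := by
      apply Real.exp_le_exp.2
      nlinarith [sq_nonneg (r - 6)]
    _ = _ := Real.exp_add _ _

/-- If `|γ| ≤ 3`, moving a weight between comparable positive quantities costs at most the cube
of the comparison factor. -/
lemma rpow_le_cube_mul {γ a t k : ℝ} (h1 : -3 ≤ γ) (h2 : γ ≤ 3) (ha : 0 < a) (ht : 0 < t)
    (hk : 1 ≤ k) (hat : a ≤ k * t) (hta : t ≤ k * a) : t ^ γ ≤ k ^ 3 * a ^ γ := by
  have hk0 : 0 < k := by linarith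
  rcases le_total 0 γ with hγ | hγ
  · calc t ^ γ ≤ (k * a) ^ γ := Real.rpow_le_rpow ht.le hta hγ
      _ = k ^ γ * a ^ γ := Real.mul_rpow hk0.le ha.le
      _ ≤ k ^ (3 : ℝ) * a ^ γ := by gcongr
      _ = _ := by norm_num
  · have : a / k ≤ t := by rw [div_le_iff₀ hk0]; linarith
    calc t ^ γ ≤ (a / k) ^ γ := Real.rpow_le_rpow_of_nonpos (by positivity) this hγ
      _ = k ^ (-γ) * a ^ γ := by
        rw [Real.div_rpow ha.le hk0.le, Real.rpow_neg hk0.le, div_eq_inv_mul]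
      _ ≤ k ^ (3 : ℝ) * a ^ γ := by gcongr; linarith
      _ = _ := by norm_num

/-- Where `|v-u| ≥ 1` the quantities `|v-u|` and `1+|v|` agree up to the factor `2(1+|u|)`, which
the Gaussian absorbs; where `|v-u| < 1` the same factor compares `1` and `1+|v|`, and the
singularity `|v-u|^γ` is kept. -/
lemma cfi_le {γ : ℝ} (h1 : -3 < γ) (h2 : γ ≤ 1) (v u : V3) :
    cfi γ v u ≤ (1 + ‖v‖) ^ γ *
      (8 * Real.exp 9 * (Real.exp (-(1 / 4) * ‖u‖ ^ 2) + sing γ (v - u))) := by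
  have hu := norm_nonneg u
  have hv := norm_nonneg v
  have hE := one_add_cube_mul_exp_le ‖u‖ hu
  have hvu : ‖v‖ ≤ ‖v - u‖ + ‖u‖ := by simpa using norm_add_le (v - u) u
  have huv : ‖v - u‖ ≤ ‖v‖ + ‖u‖ := norm_sub_le v u
  have hs := sing_nonneg γ (v - u)
  rcases le_or_gt 1 ‖v - u‖ with h | h
  · have key : ‖v - u‖ ^ γ ≤ (2 * (1 + ‖u‖)) ^ 3 * (1 + ‖v‖) ^ γ :=
      rpow_le_cube_mul h1.le (by linarith) (by linarith) (by linarith) (by linarith)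
        (by nlinarith) (by nlinarith)
    calc cfi γ v u ≤ (2 * (1 + ‖u‖)) ^ 3 * (1 + ‖v‖) ^ γ * Real.exp (-‖u‖ ^ 2 / 2) := by
          unfold cfi; gcongr
      _ = (1 + ‖v‖) ^ γ * (8 * ((1 + ‖u‖) ^ 3 * Real.exp (-‖u‖ ^ 2 / 2))) := by ring
      _ ≤ (1 + ‖v‖) ^ γ * (8 * (Real.exp 9 * Real.exp (-(1 / 4) * ‖u‖ ^ 2))) := by gcongr
      _ ≤ (1 + ‖v‖) ^ γ *
          (8 * (Real.exp 9 * (Real.exp (-(1 / 4) * ‖u‖ ^ 2) + sing γ (v - u)))) := by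
        gcongr; linarith
      _ = _ := by ring
  · have key : (1 : ℝ) ^ γ ≤ (2 * (1 + ‖u‖)) ^ 3 * (1 + ‖v‖) ^ γ :=
      rpow_le_cube_mul h1.le (by linarith) (by linarith) one_pos (by linarith)
        (by linarith) (by nlinarith)
    rw [Real.one_rpow] at key
    have hsing : sing γ (v - u) = ‖v - u‖ ^ γ := by
      unfold sing
      rw [Set.indicator_of_mem (by simpa using h)]
    have hE1 : Real.exp (-(1 / 4) * ‖u‖ ^ 2) ≤ 1 := Real.exp_le_one_iff.2 (by nlinarith)
    calc cfi γ v u = 1 * (sing γ (v - u) * Real.exp (-‖u‖ ^ 2 / 2)) := by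
          rw [hsing, one_mul]; rfl
      _ ≤ (2 * (1 + ‖u‖)) ^ 3 * (1 + ‖v‖) ^ γ *
          (sing γ (v - u) * Real.exp (-‖u‖ ^ 2 / 2)) := by gcongr
      _ = (1 + ‖v‖) ^ γ *
          (8 * ((1 + ‖u‖) ^ 3 * Real.exp (-‖u‖ ^ 2 / 2) * sing γ (v - u))) := by ring
      _ ≤ (1 + ‖v‖) ^ γ *
          (8 * (Real.exp 9 * Real.exp (-(1 / 4) * ‖u‖ ^ 2) * sing γ (v - u))) := by gcongr
      _ ≤ (1 + ‖v‖) ^ γ * (8 * (Real.exp 9 * 1 * sing γ (v - u))) := by gcongr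
      _ ≤ (1 + ‖v‖) ^ γ *
          (8 * (Real.exp 9 * 1 * (Real.exp (-(1 / 4) * ‖u‖ ^ 2) + sing γ (v - u)))) := by
        gcongr; linarith [Real.exp_pos (-(1 / 4) * ‖u‖ ^ 2)]
      _ = _ := by ring

lemma integrable_majorant {γ : ℝ} (h1 : -3 < γ) (v : V3) :
    Integrable fun u : V3 => Real.exp (-(1 / 4) * ‖u‖ ^ 2) + sing γ (v - u) :=
  (integrable_gauss (by norm_num)).add ((integrable_sing h1).comp_sub_left v)

lemma integrable_cfi {γ : ℝ} (h1 : -3 < γ) (h2 : γ ≤ 1) (v : V3) : Integrable (cfi γ v) := by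
  refine (((integrable_majorant h1 v).const_mul (8 * Real.exp 9)).const_mul
    ((1 + ‖v‖) ^ γ)).mono' ?_ (.of_forall fun u => ?_)
  · apply Measurable.aestronglyMeasurable
    unfold cfi
    fun_prop
  · rw [Real.norm_of_nonneg (cfi_nonneg γ v u)]
    exact cfi_le h1 h2 v u

lemma exists_upper {γ : ℝ} (h1 : -3 < γ) (h2 : γ ≤ 1) :
    ∃ c > (0 : ℝ), ∀ v : V3, ∫ u, cfi γ v u ≤ c * (1 + ‖v‖) ^ γ := by
  have hG := integrable_gauss (a := 1 / 4) (by norm_num)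
  have hpos : 0 < ∫ u : V3, Real.exp (-(1 / 4) * ‖u‖ ^ 2) := integral_exp_pos hG
  have hs : 0 ≤ ∫ u : V3, sing γ u := integral_nonneg (sing_nonneg γ)
  refine ⟨8 * Real.exp 9 * ((∫ u : V3, Real.exp (-(1 / 4) * ‖u‖ ^ 2)) + ∫ u : V3, sing γ u),
    by positivity, fun v => ?_⟩
  refine (integral_mono (integrable_cfi h1 h2 v) (((integrable_majorant h1 v).const_mul
    (8 * Real.exp 9)).const_mul ((1 + ‖v‖) ^ γ)) (cfi_le h1 h2 v)).trans_eq ?_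
  rw [integral_const_mul, integral_const_mul,
    integral_add hG ((integrable_sing h1).comp_sub_left v), integral_sub_left_eq_self (sing γ)]
  ring

/-! ### Lower bound -/

/-- `|v-u|` and `|v+u|` are both at most `(1+|v|)(1+|u|)`, and by the triangle inequality the
larger one is at least `|v|` and `|u|`, hence at least a multiple of `1+|v|`. The first fact gives
the bound for `γ ≤ 0`, the second for `γ ≥ 0`. -/
lemma le_cfi_add_cfi {γ : ℝ} (h1 : -3 < γ) (h2 : γ ≤ 1) {v u : V3} (h : u ≠ v) :
    (1 + ‖v‖) ^ γ * (‖u‖ / (2 * (1 + ‖u‖) ^ 4) * Real.exp (-‖u‖ ^ 2 / 2))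
      ≤ cfi γ v u + cfi γ v (-u) := by
  have hu := norm_nonneg u
  have hv := norm_nonneg v
  have hneg : cfi γ v (-u) = ‖v + u‖ ^ γ * Real.exp (-‖u‖ ^ 2 / 2) := by simp [cfi]
  have hz : 0 < ‖v - u‖ := norm_pos_iff.2 (sub_ne_zero.2 h.symm)
  rw [hneg, cfi, ← add_mul, ← mul_assoc]
  refine mul_le_mul_of_nonneg_right ?_ (Real.exp_pos _).le
  have hp : 0 ≤ ‖v + u‖ ^ γ := by positivity
  have hm : 0 ≤ ‖v - u‖ ^ γ := by positivity
  rcases le_total 0 γ with hγ | hγ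
  · set q : ℝ := ‖u‖ / (2 * (1 + ‖u‖)) with hq
    have hq0 : 0 ≤ q := by positivity
    have hq1 : q ≤ 1 := by
      rw [hq, div_le_one (by positivity)]
      linarith
    have hcube : ‖u‖ / (2 * (1 + ‖u‖) ^ 4) ≤ q := by
      rw [hq]
      gcongr
      exact le_self_pow₀ (by linarith) (by norm_num)
    have hqγ : q ≤ q ^ γ := by
      simpa using Real.rpow_le_rpow_of_exponent_ge' hq0 hq1 hγ h2
    have hqm : (1 + ‖v‖) * q ≤ max ‖v - u‖ ‖v + u‖ := by
      have e1 : 2 * ‖v‖ ≤ ‖v - u‖ + ‖v + u‖ := by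
        have := norm_add_le (v - u) (v + u)
        rw [show v - u + (v + u) = (2 : ℝ) • v by rw [two_smul]; abel, norm_smul] at this
        simpa using this
      have e2 : 2 * ‖u‖ ≤ ‖v - u‖ + ‖v + u‖ := by
        have := norm_sub_le (v + u) (v - u)
        rw [show v + u - (v - u) = (2 : ℝ) • u by rw [two_smul]; abel, norm_smul] at this
        simp only [Real.norm_ofNat] at this
        linarith
      have e3 := le_max_left ‖v - u‖ ‖v + u‖
      have e4 := le_max_right ‖v - u‖ ‖v + u‖
      rw [hq, ← mul_div_assoc, div_le_iff₀ (by positivity)]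
      nlinarith
    have hmax : (max ‖v - u‖ ‖v + u‖) ^ γ ≤ ‖v - u‖ ^ γ + ‖v + u‖ ^ γ := by
      rcases max_choice ‖v - u‖ ‖v + u‖ with e | e <;> rw [e] <;> linarith
    calc (1 + ‖v‖) ^ γ * (‖u‖ / (2 * (1 + ‖u‖) ^ 4)) ≤ (1 + ‖v‖) ^ γ * q ^ γ := by
          gcongr; exact hcube.trans hqγ
      _ = ((1 + ‖v‖) * q) ^ γ := (Real.mul_rpow (by positivity) hq0).symm
      _ ≤ (max ‖v - u‖ ‖v + u‖) ^ γ := by gcongr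
      _ ≤ _ := hmax
  · have hle : ‖v - u‖ ≤ (1 + ‖v‖) * (1 + ‖u‖) := by
      have := norm_sub_le v u
      nlinarith
    have hc : ((1 + ‖u‖) ^ 3)⁻¹ ≤ (1 + ‖u‖) ^ γ := by
      rw [← Real.rpow_natCast, ← Real.rpow_neg (by positivity)]
      exact Real.rpow_le_rpow_of_exponent_le (by linarith) (by push_cast; linarith)
    have hd : ‖u‖ / (2 * (1 + ‖u‖) ^ 4) ≤ (1 + ‖u‖) ^ γ := by
      refine le_trans ?_ hc
      rw [div_le_iff₀ (by positivity), inv_mul_eq_div, le_div_iff₀ (by positivity)]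
      nlinarith [pow_pos (show (0 : ℝ) < 1 + ‖u‖ by linarith) 3]
    calc (1 + ‖v‖) ^ γ * (‖u‖ / (2 * (1 + ‖u‖) ^ 4)) ≤ (1 + ‖v‖) ^ γ * (1 + ‖u‖) ^ γ := by
          gcongr
      _ = ((1 + ‖v‖) * (1 + ‖u‖)) ^ γ := (Real.mul_rpow (by positivity) (by positivity)).symm
      _ ≤ ‖v - u‖ ^ γ := Real.rpow_le_rpow_of_nonpos hz hle hγ
      _ ≤ _ := by linarith

lemma exists_lower {γ : ℝ} (h1 : -3 < γ) (h2 : γ ≤ 1) :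
    ∃ c > (0 : ℝ), ∀ v : V3, c * (1 + ‖v‖) ^ γ ≤ ∫ u, cfi γ v u := by
  set k : V3 → ℝ := fun u => ‖u‖ / (2 * (1 + ‖u‖) ^ 4) * Real.exp (-‖u‖ ^ 2 / 2) with hk
  have hk0 : 0 ≤ k := fun u => by simp only [hk, Pi.zero_apply]; positivity
  have hkc : Continuous k := by
    refine Continuous.mul (Continuous.div (by fun_prop) (by fun_prop) fun u => ?_) (by fun_prop)
    positivity
  have hki : Integrable k := by
    refine (integrable_gauss (a := 1 / 2) (by norm_num)).mono' hkc.aestronglyMeasurable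
      (.of_forall fun u => ?_)
    rw [Real.norm_of_nonneg (hk0 u)]
    have hq : ‖u‖ / (2 * (1 + ‖u‖) ^ 4) ≤ 1 := by
      have hu := norm_nonneg u
      have := le_self_pow₀ (show 1 ≤ 1 + ‖u‖ by linarith) (show 4 ≠ 0 by norm_num)
      rw [div_le_one (by positivity)]
      linarith
    calc k u ≤ 1 * Real.exp (-‖u‖ ^ 2 / 2) := by simp only [hk]; gcongr
      _ = _ := by rw [one_mul]; congr 1; ring
  obtain ⟨x, hx⟩ := exists_ne (0 : V3)
  have hpos : 0 < ∫ u, k u := by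
    refine integral_pos_of_integrable_nonneg_nonzero (x := x) hkc hki hk0 ?_
    have := norm_pos_iff.2 hx
    simp only [hk]
    positivity
  refine ⟨(∫ u, k u) / 2, by positivity, fun v => ?_⟩
  have hi := integrable_cfi h1 h2 v
  have h := integral_mono_ae (hki.const_mul ((1 + ‖v‖) ^ γ)) (hi.add hi.comp_neg)
    (by filter_upwards [ae_ne_V3 v] with u hu using le_cfi_add_cfi h1 h2 hu)
  simp only [Pi.add_apply] at h
  rw [integral_const_mul, integral_add hi hi.comp_neg, integral_neg_eq_self (cfi γ v)] at h
  linarith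

/-- Two-sided bound for the collision frequency. -/
theorem collision_frequency_two_sided (γ : ℝ) (hγ1 : -3 < γ) (hγ2 : γ ≤ 1) :
    (∃ c₁ > (0 : ℝ), ∃ c₂ > (0 : ℝ), ∀ v : V3,
      c₁ * (1 + ‖v‖) ^ γ ≤ (∫ u : V3, ‖v - u‖ ^ γ * Real.exp (-‖u‖ ^ 2 / 2)) ∧
      (∫ u : V3, ‖v - u‖ ^ γ * Real.exp (-‖u‖ ^ 2 / 2)) ≤ c₂ * (1 + ‖v‖) ^ γ) ∧
    ∀ b : ℝ → ℝ, KernelOK b →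
      (∀ e₀ : V3, ‖e₀‖ = 1 → ∀ v : V3,
        nufreq γ b v =
          (∫ ω : Sph, b ⟪e₀, (ω : V3)⟫ ∂sphM) *
            ((2 * π)⁻¹ * ∫ u : V3, ‖v - u‖ ^ γ * Real.exp (-‖u‖ ^ 2 / 2))) ∧
      (∀ e₀ : V3, ‖e₀‖ = 1 → 0 < (∫ ω : Sph, b ⟪e₀, (ω : V3)⟫ ∂sphM) →
        ∃ c₁ > (0 : ℝ), ∃ c₂ > (0 : ℝ), ∀ v : V3,
          c₁ * (1 + ‖v‖) ^ γ ≤ nufreq γ b v ∧ nufreq γ b v ≤ c₂ * (1 + ‖v‖) ^ γ) := by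
  obtain ⟨c₁, hc₁, hl⟩ := exists_lower hγ1 hγ2
  obtain ⟨c₂, hc₂, hr⟩ := exists_upper hγ1 hγ2
  refine ⟨⟨c₁, hc₁, c₂, hc₂, fun v => ⟨hl v, hr v⟩⟩, fun b hb =>
    ⟨fun e₀ he v => nufreq_eq γ hb.1 he v, fun e₀ he hpos => ?_⟩⟩
  set A := ∫ ω : Sph, b ⟪e₀, (ω : V3)⟫ ∂sphM
  have hA : 0 < A * (2 * π)⁻¹ := by positivity
  refine ⟨A * (2 * π)⁻¹ * c₁, by positivity, A * (2 * π)⁻¹ * c₂, by positivity, fun v => ?_⟩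
  rw [nufreq_eq γ hb.1 he v, ← mul_assoc, mul_assoc _ c₁, mul_assoc _ c₂]
  exact ⟨mul_le_mul_of_nonneg_left (hl v) hA.le, mul_le_mul_of_nonneg_left (hr v) hA.le⟩
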